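/- There exists a universal constant K > 0 with the following property (Theorem 5(c) with the adaptive weights made explicit). Let d, m ≥ 1 and n₁,…,n_m ≥ 1 be integers, let n > 0 and β̄ > 0 be reals, Γ > 0, λ > 0, and let C ⊆ ℝ^d be a nonempty compact convex set. For each i ∈ {1,…,m} and j ∈ {1,…,n_i}, let ℓ_{ij} : ℝ^d → ℝ be differentiable, λ-strongly convex, and Γ-Lipschitz on C; set L_i = ∑_{j=1}^{n_i} ℓ_{ij} and let θ*_i be the minimizer of L_i over C. Define the adaptive weights by ω_i² = n β̄/(m n_i), set T = ⌈(2/d)·(∑_{i=1}^m n_i)/(∑_{i=1}^m 1/(ω_i² n_i))⌉, let (ξ_i⁽ᵗ⁾)_{i ∈ [m], t ∈ [T]} be independent standard Gaussian random vectors in ℝ^d, let θ_i⁽⁰⁾ ∈ C be deterministic, and define θ_i⁽ᵗ⁾ = Π_C( θ_i⁽ᵗ⁻¹⁾ − η_i⁽ᵗ⁾( ω_i ∇L_i(θ_i⁽ᵗ⁻¹⁾) + Γ√(T/2)·ξ_i⁽ᵗ⁾ ) ) with η_i⁽ᵗ⁾ = 1/(ω_i n_i λ t). Then ∑_{i=1}^m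 E[L_i(θ_i⁽ᵀ⁾)] − ∑_{i=1}^m L_i(θ*_i) ≤ K · (Γ² d m² (1 + log T)) / (n λ β̄). -/

import Mathlib

open MeasureTheory ProbabilityTheory

/-!
For a fixed user, dividing the step through by the weight `w` turns the recursion into projected
gradient descent for the sum `F` of the `n` losses of that user, which is `n λ`-strongly convex and
`n Γ`-Lipschitz on `C`, with steps `1 / (n λ t)` and noise `(σ / w) ξ`. Since the noise has mean
zero given the past, comparing the iterates with any point of `C` known at time `s` gives a
telescoping inequality for the sum of the excess values of `F` after time `s`. Taking the
comparison point to be `θ s` itself controls the suffix averages of the values of `F`, and summing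
their changes bounds the last iterate by `O((n² Γ² + d σ² / w²) (1 + log T) / (n λ T))`. With
`σ² = Γ² T / 2` the noise part does not depend on `T`, and `T` is chosen so that the other part
does not exceed it by more than a constant factor.
-/

section LastIterate

open Finset

lemma sum_range_tsub_eq_sum_Ico {M : Type*} [AddCommMonoid M] (g : ℕ → M) {k T : ℕ} (hk : k ≤ T) :
    ∑ j ∈ range k, g (T - j) = ∑ t ∈ Ico (T - k) T, g (t + 1) := by
  rw [range_eq_Ico, sum_Ico_reflect g 0 (by lia), sum_Ico_add' g]
  congr 2; lia

lemma sum_range_one_div_add_one_le_one_add_log (T : ℕ) :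
    ∑ t ∈ range T, 1 / ((t : ℝ) + 1) ≤ 1 + Real.log T := by
  simpa [harmonic] using harmonic_le_one_add_log T

lemma sum_Ico_one_div_add_one_le {k T : ℕ} (hk : k ≤ T) :
    ∑ t ∈ Ico (T - k) T, 1 / ((t : ℝ) + 1) ≤ k * (1 / ((T : ℝ) - k + 1)) := by
  have hkT : (k : ℝ) ≤ T := by exact_mod_cast hk
  have h_term : ∀ t ∈ Ico (T - k) T, 1 / ((t : ℝ) + 1) ≤ 1 / ((T : ℝ) - k + 1) := by
    intro t ht
    have hTt : (T : ℝ) ≤ t + k := by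
      have := (mem_Ico.1 ht).1
      exact_mod_cast (by lia : T ≤ t + k)
    exact one_div_le_one_div_of_le (by linarith) (by linarith)
  simpa [Nat.sub_sub_self hk] using sum_le_card_nsmul _ _ _ h_term

lemma sum_Ico_one_div_reflect (T : ℕ) :
    ∑ j ∈ Ico 1 T, 1 / ((T : ℝ) - j + 1) = ∑ j ∈ Ico 1 T, 1 / ((j : ℝ) + 1) := by
  have h := sum_Ico_reflect (fun j : ℕ => 1 / ((j : ℝ) + 1)) 1 (Nat.le_succ T)
  rw [Nat.add_sub_cancel_left, Nat.add_sub_cancel] at h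
  rw [← h]
  refine sum_congr rfl fun j hj => ?_
  rw [Nat.cast_sub (mem_Ico.1 hj).2.le]

lemma sum_Ico_one_div_mul_le (T : ℕ) :
    ∑ j ∈ Ico 1 T, 1 / (((j : ℝ) + 1) * ((T : ℝ) - j + 1)) ≤ 2 * (1 + Real.log T) / T := by
  have h_log : ∑ j ∈ Ico 1 T, 1 / ((j : ℝ) + 1) ≤ 1 + Real.log T := by
    refine le_trans (sum_le_sum_of_subset_of_nonneg ?_ fun _ _ _ => by positivity)
      (sum_range_one_div_add_one_le_one_add_log T)
    rw [range_eq_Ico]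
    exact Ico_subset_Ico_left zero_le_one
  have h_sum_nonneg : 0 ≤ ∑ j ∈ Ico 1 T, 1 / ((j : ℝ) + 1) := sum_nonneg fun _ _ => by positivity
  have h_partial_fractions : ∀ j ∈ Ico 1 T, 1 / (((j : ℝ) + 1) * ((T : ℝ) - j + 1)) =
      (1 / ((j : ℝ) + 1) + 1 / ((T : ℝ) - j + 1)) / (T + 2) := by
    intro j hj
    have hjT : (j : ℝ) < T := by exact_mod_cast (mem_Ico.1 hj).2
    have : (T : ℝ) - j + 1 ≠ 0 := by linarith
    field_simp
    ring
  rcases T.eq_zero_or_pos with rfl | hT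
  · simp
  rw [sum_congr rfl h_partial_fractions, ← sum_div, sum_add_distrib, sum_Ico_one_div_reflect]
  have hT' : (0 : ℝ) < T := by exact_mod_cast hT
  exact div_le_div₀ (by linarith) (by linarith) hT' (by linarith)

lemma average_le_average_succ_add {b : ℕ → ℝ} {k : ℕ} {r : ℝ} (hk : 1 ≤ k)
    (h : ∑ j ∈ range k, (b j - b k) ≤ k * r) :
    (∑ j ∈ range k, b j) / k ≤ (∑ j ∈ range (k + 1), b j) / (k + 1) + r / (k + 1) := by
  have hk' : (0 : ℝ) < k := by exact_mod_cast hk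
  rw [sum_sub_distrib, sum_const, card_range, nsmul_eq_mul] at h
  rw [sum_range_succ, ← add_div, div_le_div_iff₀ hk' (by positivity)]
  linarith

lemma apply_zero_le_average_add_sum {b r : ℕ → ℝ} {n : ℕ} (hn : 1 ≤ n)
    (h : ∀ k, 1 ≤ k → k < n → ∑ j ∈ range k, (b j - b k) ≤ k * r k) :
    b 0 ≤ (∑ j ∈ range n, b j) / n + ∑ k ∈ Ico 1 n, r k / (k + 1) := by
  induction n, hn using Nat.le_induction with
  | base => simp
  | succ n hn ih =>
    have h_avg := average_le_average_succ_add hn (h n hn n.lt_succ_self)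
    have h_ih := ih fun k hk hkn => h k hk (hkn.trans n.lt_succ_self)
    rw [sum_Ico_succ_top hn]
    push_cast
    linarith

/- Suffix averaging, after Shamir and Zhang: the average of the last `k` values changes by at most
`c / ((k + 1) (T - k + 1))` when `k` grows by one, and the total change is `O(c log T / T)`. -/
lemma last_sub_le_of_sum_Ico_sub_le {a : ℕ → ℝ} {T : ℕ} {c f : ℝ} (hT : 1 ≤ T) (hc : 0 ≤ c)
    (h_suffix : ∀ s < T, ∑ t ∈ Ico s T, (a (t + 1) - a s) ≤ c * ∑ t ∈ Ico s T, 1 / ((t : ℝ) + 1))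
    (h_total : ∑ t ∈ range T, (a (t + 1) - f) ≤ c * ∑ t ∈ range T, 1 / ((t : ℝ) + 1)) :
    a T - f ≤ 3 * c * (1 + Real.log T) / T := by
  have hT' : (0 : ℝ) < T := by exact_mod_cast hT
  have h_reversed : ∀ k, 1 ≤ k → k < T →
      ∑ j ∈ range k, (a (T - j) - a (T - k)) ≤ k * (c * (1 / ((T : ℝ) - k + 1))) := by
    intro k hk hkT
    rw [sum_range_tsub_eq_sum_Ico (fun t => a t - a (T - k)) hkT.le]
    refine (h_suffix (T - k) (by lia)).trans ?_
    rw [mul_left_comm]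
    exact mul_le_mul_of_nonneg_left (sum_Ico_one_div_add_one_le hkT.le) hc
  have h_last := apply_zero_le_average_add_sum hT h_reversed
  rw [Nat.sub_zero, sum_range_tsub_eq_sum_Ico a le_rfl, Nat.sub_self, ← range_eq_Ico] at h_last
  have h_average : (∑ t ∈ range T, a (t + 1)) / T - f ≤ c * (1 + Real.log T) / T := by
    rw [sum_sub_distrib, sum_const, card_range, nsmul_eq_mul] at h_total
    rw [div_sub' hT'.ne']
    gcongr
    exact h_total.trans
      (mul_le_mul_of_nonneg_left (sum_range_one_div_add_one_le_one_add_log T) hc)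
  have h_drift : ∑ k ∈ Ico 1 T, c * (1 / ((T : ℝ) - k + 1)) / (k + 1) ≤
      c * (2 * (1 + Real.log T) / T) := by
    refine le_trans (le_of_eq ?_) (mul_le_mul_of_nonneg_left (sum_Ico_one_div_mul_le T) hc)
    rw [mul_sum]
    refine sum_congr rfl fun k _ => ?_
    rw [mul_div_assoc, div_div, mul_comm ((T : ℝ) - k + 1)]
  calc a T - f ≤ c * (1 + Real.log T) / T + c * (2 * (1 + Real.log T) / T) := by linarith
    _ = 3 * c * (1 + Real.log T) / T := by ring

end LastIterate

section StrongConvexity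

open Filter Topology
open scoped NNReal Gradient RealInnerProductSpace

lemma lipschitzOnWith_sum {ι X : Type*} [PseudoMetricSpace X] {C : Set X} (s : Finset ι)
    {f : ι → X → ℝ} {K : ι → ℝ≥0} (hf : ∀ i ∈ s, LipschitzOnWith (K i) (f i) C) :
    LipschitzOnWith (∑ i ∈ s, K i) (fun x => ∑ i ∈ s, f i x) C := by
  induction s using Finset.cons_induction with
  | empty => exact (LipschitzWith.const (0 : ℝ)).lipschitzOnWith
  | cons i s hi ih =>
    obtain ⟨hfi, hfs⟩ := Finset.forall_mem_cons _ _ |>.1 hf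
    simp only [Finset.sum_cons]
    exact hfi.add (ih hfs)

section NormedSpace

variable {ι E : Type*} [NormedAddCommGroup E] [NormedSpace ℝ E] {C : Set E}

lemma strongConvexOn_sum (hC : Convex ℝ C) (s : Finset ι) {f : ι → E → ℝ} {μ : ι → ℝ}
    (hf : ∀ i ∈ s, StrongConvexOn C (μ i) (f i)) :
    StrongConvexOn C (∑ i ∈ s, μ i) (fun x => ∑ i ∈ s, f i x) := by
  induction s using Finset.cons_induction with
  | empty => simpa using convexOn_const 0 hC
  | cons i s hi ih =>
    obtain ⟨hfi, hfs⟩ := Finset.forall_mem_cons _ _ |>.1 hf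
    simp only [Finset.sum_cons]
    refine UniformConvexOn.mono (fun r => ?_) (hfi.add (ih hfs))
    simp only [Pi.add_apply, add_div, add_mul, le_refl]

-- A strongly convex function grows quadratically away from a point, a Lipschitz one linearly.
lemma isBounded_of_strongConvexOn_of_lipschitzOnWith {f : E → ℝ} {μ : ℝ} {A : ℝ≥0} (hμ : 0 < μ)
    (hf : StrongConvexOn C μ f) (hA : LipschitzOnWith A f C) : Bornology.IsBounded C := by
  refine Metric.isBounded_iff.2 ⟨4 * A / μ, fun x hx y hy => ?_⟩
  rw [dist_eq_norm]
  set z : E := (1 / 2 : ℝ) • x + (1 / 2 : ℝ) • y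
  have hz : z ∈ C := hf.1 hx hy (by norm_num) (by norm_num) (by norm_num)
  have h_mid : f z ≤ 1 / 2 * f x + 1 / 2 * f y - 1 / 2 * (1 / 2) * (μ / 2 * ‖x - y‖ ^ 2) :=
    hf.2 hx hy (by norm_num) (by norm_num) (by norm_num)
  have h_dist_x : ‖x - z‖ = 1 / 2 * ‖x - y‖ := by
    rw [show x - z = (1 / 2 : ℝ) • (x - y) by module, norm_smul]
    norm_num
  have h_dist_y : ‖y - z‖ = 1 / 2 * ‖x - y‖ := by
    rw [show y - z = (1 / 2 : ℝ) • (y - x) by module, norm_smul, norm_sub_rev]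
    norm_num
  have h_fx : f x - f z ≤ A * ‖x - z‖ := (le_abs_self _).trans (hA.norm_sub_le hx hz)
  have h_fy : f y - f z ≤ A * ‖y - z‖ := (le_abs_self _).trans (hA.norm_sub_le hy hz)
  rw [h_dist_x] at h_fx
  rw [h_dist_y] at h_fy
  have h_quadratic : ‖x - y‖ * (‖x - y‖ * μ) ≤ ‖x - y‖ * (4 * A) := by linarith
  rw [le_div_iff₀ hμ]
  rcases (norm_nonneg (x - y)).eq_or_lt with h0 | hpos
  · rw [← h0, zero_mul]
    positivity
  · exact le_of_mul_le_mul_left h_quadratic hpos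

end NormedSpace

variable {E : Type*} [NormedAddCommGroup E] [InnerProductSpace ℝ E] [CompleteSpace E]
  {C : Set E} {f : E → ℝ} {x y : E}

lemma tendsto_slope_inner_gradient (hf : DifferentiableAt ℝ f x) (v : E) :
    Tendsto (fun t : ℝ => t⁻¹ • (f (x + t • v) - f x)) (𝓝[>] 0) (𝓝 ⟪∇ f x, v⟫) := by
  simpa using (hf.hasGradientAt.hasFDerivAt.hasLineDerivAt v).tendsto_slope_zero_right

lemma add_inner_gradient_add_le_of_strongConvexOn {μ : ℝ} (hf : StrongConvexOn C μ f)
    (hfx : DifferentiableAt ℝ f x) (hx : x ∈ C) (hy : y ∈ C) :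
    f x + ⟪∇ f x, y - x⟫ + μ / 2 * ‖y - x‖ ^ 2 ≤ f y := by
  have h_slope : ∀ᶠ t : ℝ in 𝓝[>] 0, t⁻¹ • (f (x + t • (y - x)) - f x) ≤
      f y - f x - (1 - t) * (μ / 2 * ‖y - x‖ ^ 2) := by
    filter_upwards [Ioo_mem_nhdsGT (zero_lt_one (α := ℝ))] with t ht
    have h := hf.2 hx hy (sub_nonneg.2 ht.2.le) ht.1.le (sub_add_cancel 1 t)
    rw [show (1 - t) • x + t • y = x + t • (y - x) by module, norm_sub_rev] at h
    rw [smul_eq_mul, inv_mul_le_iff₀ ht.1]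
    simp only [smul_eq_mul] at h
    linarith
  have h_lim : Tendsto (fun t : ℝ => f y - f x - (1 - t) * (μ / 2 * ‖y - x‖ ^ 2)) (𝓝[>] 0)
      (𝓝 (f y - f x - (1 - 0) * (μ / 2 * ‖y - x‖ ^ 2))) :=
    (Continuous.tendsto (by fun_prop) 0).mono_left nhdsWithin_le_nhds
  have := le_of_tendsto_of_tendsto (tendsto_slope_inner_gradient hfx (y - x)) h_lim h_slope
  linarith

lemma neg_mul_norm_le_inner_gradient_of_lipschitzOnWith {A : ℝ≥0} (hC : Convex ℝ C)
    (hf : LipschitzOnWith A f C) (hfx : DifferentiableAt ℝ f x) (hx : x ∈ C) (hy : y ∈ C) :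
    -(A * ‖y - x‖) ≤ ⟪∇ f x, y - x⟫ := by
  refine ge_of_tendsto (tendsto_slope_inner_gradient hfx (y - x)) ?_
  filter_upwards [Ioo_mem_nhdsGT (zero_lt_one (α := ℝ))] with t ht
  have h_mem : x + t • (y - x) ∈ C := hC.add_smul_sub_mem hx hy ⟨ht.1.le, ht.2.le⟩
  have h_lip := hf.norm_sub_le h_mem hx
  rw [add_sub_cancel_left, norm_smul, Real.norm_of_nonneg ht.1.le] at h_lip
  have h_neg := (abs_le.1 h_lip).1
  rw [smul_eq_mul, le_inv_mul_iff₀ ht.1]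
  linarith

end StrongConvexity

section MetricProjection

open scoped RealInnerProductSpace

variable {E : Type*} [NormedAddCommGroup E]

/-- `proj` maps every point to a nearest point of `C`. The existence of the nearest points is part
of the condition. -/
def IsMetricProjection (C : Set E) (proj : E → E) : Prop :=
  ∀ x, proj x ∈ C ∧ ∀ y ∈ C, ‖x - proj x‖ ≤ ‖x - y‖

variable [InnerProductSpace ℝ E] {C : Set E} {proj : E → E}

namespace IsMetricProjection

lemma inner_sub_sub_nonpos (hproj : IsMetricProjection C proj) (hC : Convex ℝ C) (x : E) {y : E}
    (hy : y ∈ C) : ⟪x - proj x, y - proj x⟫ ≤ 0 := by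
  obtain ⟨h_mem, h_le⟩ := hproj x
  have : Nonempty C := ⟨⟨proj x, h_mem⟩⟩
  have h_bdd : BddBelow (Set.range fun y : C => ‖x - y‖) :=
    ⟨0, Set.forall_mem_range.2 fun _ => norm_nonneg _⟩
  refine (norm_eq_iInf_iff_real_inner_le_zero hC h_mem).1 (le_antisymm ?_ ?_) y hy
  · exact le_ciInf fun y => h_le y y.2
  · exact ciInf_le h_bdd ⟨proj x, h_mem⟩

lemma lipschitzWith_one (hproj : IsMetricProjection C proj) (hC : Convex ℝ C) :
    LipschitzWith 1 proj := by
  refine LipschitzWith.mk_one fun x y => ?_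
  rw [dist_eq_norm, dist_eq_norm]
  have hx := hproj.inner_sub_sub_nonpos hC x (hproj y).1
  have hy := hproj.inner_sub_sub_nonpos hC y (hproj x).1
  have h_firm : ‖proj x - proj y‖ ^ 2 ≤ ⟪x - y, proj x - proj y⟫ := by
    rw [← real_inner_self_eq_norm_sq]
    simp only [inner_sub_left, inner_sub_right] at hx hy ⊢
    linarith
  have h_cauchy := real_inner_le_norm (x - y) (proj x - proj y)
  by_contra! h_lt
  nlinarith [norm_nonneg (x - y)]

lemma two_mul_inner_le (hproj : IsMetricProjection C proj) (hC : Convex ℝ C) (x g : E) {u : E}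
    (hu : u ∈ C) : 2 * ⟪g, proj (x - g) - u⟫ ≤
      ‖x - u‖ ^ 2 - ‖proj (x - g) - u‖ ^ 2 - ‖proj (x - g) - x‖ ^ 2 := by
  have h := hproj.inner_sub_sub_nonpos hC (x - g) hu
  set p := proj (x - g)
  have h_three_point : ‖x - u‖ ^ 2 = ‖p - u‖ ^ 2 - 2 * ⟪p - u, p - x⟫ + ‖p - x‖ ^ 2 := by
    rw [← norm_sub_sq_real, sub_sub_sub_cancel_left]
  rw [h_three_point]
  simp only [inner_sub_left, inner_sub_right, real_inner_comm p g, real_inner_comm u g,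
    real_inner_comm u p, real_inner_comm x p, real_inner_comm u x] at h ⊢
  linarith

end IsMetricProjection

end MetricProjection

section ProjectedGradientStep

open scoped NNReal Gradient RealInnerProductSpace

variable {E : Type*} [NormedAddCommGroup E] [InnerProductSpace ℝ E] [CompleteSpace E]

/- The displacement `q = p - x` enters through `η (2 A + ‖z‖) ‖q‖ - ‖q‖² / 2`, which completing
the square bounds by `η² (2 A + ‖z‖)² / 2 ≤ η² (4 A² + ‖z‖²)`. -/
lemma mul_sub_le_of_projected_gradient_step {C : Set E} {proj : E → E} {f : E → ℝ} {μ η : ℝ}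
    {A : ℝ≥0} {x u z p : E} (hproj : IsMetricProjection C proj) (hf : StrongConvexOn C μ f)
    (hA : LipschitzOnWith A f C) (hfx : DifferentiableAt ℝ f x) (hη : 0 ≤ η) (hx : x ∈ C)
    (hu : u ∈ C) (hp : p = proj (x - η • (∇ f x + z))) :
    η * (f p - f u) ≤ (1 - η * μ) / 2 * ‖x - u‖ ^ 2 - 1 / 2 * ‖p - u‖ ^ 2
      + η * ⟪z, u - x⟫ + η ^ 2 * (4 * A ^ 2 + ‖z‖ ^ 2) := by
  have hpC : p ∈ C := hp ▸ (hproj _).1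
  have h_projection : 2 * (η * (⟪∇ f x, p - x⟫ - ⟪∇ f x, u - x⟫ + ⟪z, p - x⟫ - ⟪z, u - x⟫)) ≤
      ‖x - u‖ ^ 2 - ‖p - u‖ ^ 2 - ‖p - x‖ ^ 2 := by
    have h_split : ∀ a : E, ⟪a, p - u⟫ = ⟪a, p - x⟫ - ⟪a, u - x⟫ := fun a => by
      rw [← inner_sub_right, sub_sub_sub_cancel_right]
    have h := hproj.two_mul_inner_le hf.1 x (η • (∇ f x + z)) hu
    rw [← hp, real_inner_smul_left, inner_add_left, h_split, h_split] at h
    linarith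
  have h_strong : f x + ⟪∇ f x, u - x⟫ + μ / 2 * ‖u - x‖ ^ 2 ≤ f u :=
    add_inner_gradient_add_le_of_strongConvexOn hf hfx hx hu
  have h_gradient : -(A * ‖p - x‖) ≤ ⟪∇ f x, p - x⟫ :=
    neg_mul_norm_le_inner_gradient_of_lipschitzOnWith hf.1 hA hfx hx hpC
  have h_lipschitz : f p - f x ≤ A * ‖p - x‖ := (le_abs_self _).trans (hA.norm_sub_le hpC hx)
  have h_noise : -(‖z‖ * ‖p - x‖) ≤ ⟪z, p - x⟫ := (abs_le.1 (abs_real_inner_le_norm z (p - x))).1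
  rw [norm_sub_rev u x] at h_strong
  have h_decrease : η * (f p - f u) ≤ η * ((2 * A + ‖z‖) * ‖p - x‖ - μ / 2 * ‖x - u‖ ^ 2
      + (⟪∇ f x, p - x⟫ - ⟪∇ f x, u - x⟫ + ⟪z, p - x⟫)) :=
    mul_le_mul_of_nonneg_left (by linarith) hη
  have h_square : η * ((2 * A + ‖z‖) * ‖p - x‖) - ‖p - x‖ ^ 2 / 2 ≤
      η ^ 2 * (4 * A ^ 2 + ‖z‖ ^ 2) := by
    nlinarith [sq_nonneg (‖p - x‖ - η * (2 * A + ‖z‖)), sq_nonneg (η * (2 * A - ‖z‖))]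
  linarith

lemma sub_le_of_projected_gradient_step {C : Set E} {proj : E → E} {f : E → ℝ} {μ : ℝ} {A : ℝ≥0}
    {x u z p : E} (t : ℕ) (hproj : IsMetricProjection C proj) (hf : StrongConvexOn C μ f)
    (hA : LipschitzOnWith A f C) (hfx : DifferentiableAt ℝ f x) (hμ : 0 < μ) (hx : x ∈ C)
    (hu : u ∈ C) (hp : p = proj (x - (1 / (μ * (t + 1))) • (∇ f x + z))) :
    f p - f u ≤ μ / 2 * (t * ‖x - u‖ ^ 2) - μ / 2 * ((t + 1) * ‖p - u‖ ^ 2)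
      + ⟪z, u - x⟫ + (4 * A ^ 2 + ‖z‖ ^ 2) * (1 / (μ * (t + 1))) := by
  have hη : 0 < μ * (t + 1 : ℝ) := by positivity
  have h := mul_le_mul_of_nonneg_left
    (mul_sub_le_of_projected_gradient_step hproj hf hA hfx (by positivity) hx hu hp) hη.le
  calc f p - f u = μ * (t + 1) * (1 / (μ * (t + 1)) * (f p - f u)) := by field_simp
    _ ≤ _ := h
    _ = _ := by field_simp; ring

end ProjectedGradientStep

section MartingaleNoise

open scoped RealInnerProductSpace

variable {E Ω : Type*} [NormedAddCommGroup E] [InnerProductSpace ℝ E] {mΩ : MeasurableSpace Ω}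
  {P : Measure Ω}

lemma integrable_inner_of_bounded {z V : Ω → E} {R : ℝ} (hz : Integrable z P)
    (hV : AEStronglyMeasurable V P) (hR : ∀ ω, ‖V ω‖ ≤ R) :
    Integrable (fun ω => ⟪z ω, V ω⟫) P :=
  (innerSL ℝ).integrable_of_bilin_of_bdd_right R hz hV (.of_forall hR)

variable [CompleteSpace E]

lemma integral_inner_eq_zero_of_condExp_eq_zero [IsFiniteMeasure P] {m : MeasurableSpace Ω}
    (hm : m ≤ mΩ) {z V : Ω → E} {R : ℝ} (hz : Integrable z P) (hz0 : P[z | m] =ᵐ[P] 0)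
    (hV : StronglyMeasurable[m] V) (hR : ∀ ω, ‖V ω‖ ≤ R) :
    ∫ ω, ⟪z ω, V ω⟫ ∂P = 0 := by
  have h_int := integrable_inner_of_bounded hz (hV.mono hm).aestronglyMeasurable hR
  have h_pullout : P[fun ω => ⟪z ω, V ω⟫ | m] =ᵐ[P] fun ω => ⟪P[z | m] ω, V ω⟫ :=
    condExp_bilin_of_stronglyMeasurable_right (innerSL ℝ) hV h_int hz
  rw [← integral_condExp hm, integral_congr_ae h_pullout]
  refine integral_eq_zero_of_ae ?_
  filter_upwards [hz0] with ω hω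
  simp [hω]

variable [MeasurableSpace E] {T : ℕ} {ℱ : Filtration ℕ mΩ} {v : ℝ}

/-- A square-integrable martingale difference sequence of length `T` with variances at most `v`:
the noise of the step from time `t` to time `t + 1` is revealed at time `t + 1`. -/
structure IsMartingaleNoise (ℱ : Filtration ℕ mΩ) (ξ : Fin T → Ω → E) (v : ℝ) (P : Measure Ω) :
    Prop where
  measurable : ∀ t : Fin T, Measurable[ℱ (t + 1)] (ξ t)
  memLp : ∀ t, MemLp (ξ t) 2 P
  condExp_eq_zero : ∀ t : Fin T, P[ξ t | ℱ (t : ℕ)] =ᵐ[P] 0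
  integral_norm_sq_le : ∀ t, ∫ ω, ‖ξ t ω‖ ^ 2 ∂P ≤ v

namespace IsMartingaleNoise

variable {ξ : Fin T → Ω → E}

lemma const_smul [BorelSpace E] (hξ : IsMartingaleNoise ℱ ξ v P) (c : ℝ) :
    IsMartingaleNoise ℱ (fun t ω => c • ξ t ω) (c ^ 2 * v) P where
  measurable t := (hξ.measurable t).const_smul c
  memLp t := (hξ.memLp t).const_smul c
  condExp_eq_zero t := by
    filter_upwards [condExp_smul c (ξ t) (ℱ (t : ℕ)), hξ.condExp_eq_zero t] with ω h_smul h_zero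
    change P[c • ξ t | ℱ (t : ℕ)] ω = 0
    rw [h_smul, Pi.smul_apply, h_zero, Pi.zero_apply, smul_zero]
  integral_norm_sq_le t := by
    simp only [norm_smul, mul_pow, Real.norm_eq_abs, sq_abs]
    rw [integral_const_mul]
    exact mul_le_mul_of_nonneg_left (hξ.integral_norm_sq_le t) (sq_nonneg c)

end IsMartingaleNoise

end MartingaleNoise

section NoisyProjectedGradientDescent

open scoped NNReal Gradient RealInnerProductSpace

lemma integrable_comp_of_lipschitzOnWith {X Ω : Type*} [PseudoMetricSpace X] [MeasurableSpace X]
    [OpensMeasurableSpace X] {mΩ : MeasurableSpace Ω} {P : Measure Ω} [IsFiniteMeasure P]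
    {C : Set X} {F : X → ℝ} {A : ℝ≥0} {U : Ω → X} (hC : Bornology.IsBounded C)
    (hFc : Continuous F) (hF : LipschitzOnWith A F C) (hU : Measurable U) (hUC : ∀ ω, U ω ∈ C) :
    Integrable (fun ω => F (U ω)) P := by
  obtain ⟨R, hR⟩ := Metric.isBounded_iff.1 hC
  rcases isEmpty_or_nonempty Ω with _ | ⟨⟨ω₀⟩⟩
  · exact Integrable.of_isEmpty
  refine .of_bound (hFc.measurable.comp hU).aestronglyMeasurable (A * R + ‖F (U ω₀)‖)
    (.of_forall fun ω => ?_)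
  have h_dist : ‖F (U ω) - F (U ω₀)‖ ≤ A * R := by
    rw [← dist_eq_norm]
    exact (hF.dist_le_mul _ (hUC ω) _ (hUC ω₀)).trans
      (mul_le_mul_of_nonneg_left (hR (hUC ω) (hUC ω₀)) A.2)
  have h_triangle := norm_sub_norm_le (F (U ω)) (F (U ω₀))
  linarith

lemma integrable_norm_sub_sq {E Ω : Type*} [NormedAddCommGroup E] [MeasurableSpace E]
    [BorelSpace E] [SecondCountableTopology E] {mΩ : MeasurableSpace Ω} {P : Measure Ω}
    [IsFiniteMeasure P] {C : Set E} {X Y : Ω → E} (hC : Bornology.IsBounded C) (hX : Measurable X)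
    (hY : Measurable Y) (hXC : ∀ ω, X ω ∈ C) (hYC : ∀ ω, Y ω ∈ C) :
    Integrable (fun ω => ‖X ω - Y ω‖ ^ 2) P := by
  obtain ⟨R, hR⟩ := Metric.isBounded_iff.1 hC
  refine .of_bound ((hX.sub hY).norm.pow_const 2).aestronglyMeasurable (R ^ 2)
    (.of_forall fun ω => ?_)
  rw [Real.norm_of_nonneg (sq_nonneg _), ← dist_eq_norm]
  exact pow_le_pow_left₀ dist_nonneg (hR (hXC ω) (hYC ω)) 2

lemma measurable_gradient {E : Type*} [NormedAddCommGroup E] [InnerProductSpace ℝ E]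
    [CompleteSpace E] [MeasurableSpace E] [BorelSpace E] (F : E → ℝ) : Measurable (∇ F) :=
  (InnerProductSpace.toDual ℝ E).symm.continuous.measurable.comp (measurable_fderiv ℝ F)

variable {E Ω : Type*} [NormedAddCommGroup E] [InnerProductSpace ℝ E] {mΩ : MeasurableSpace Ω}
  {P : Measure Ω} {T : ℕ} {ℱ : Filtration ℕ mΩ} {C : Set E} {proj : E → E}

/-- `T` steps `θ (t + 1) = proj (θ t - η t • (G (θ t) + z t))` of projected descent along the
field `G`, started in `C` and perturbed by the noise `z`. -/
structure IsNoisyProjDescent [MeasurableSpace E] (C : Set E) (proj : E → E) (ℱ : Filtration ℕ mΩ)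
    (G : E → E) (η : ℕ → ℝ) (z : Fin T → Ω → E) (θ : ℕ → Ω → E) : Prop where
  measurable_zero : Measurable[ℱ 0] (θ 0)
  zero_mem : ∀ ω, θ 0 ω ∈ C
  succ : ∀ (t : ℕ) (ht : t < T),
    θ (t + 1) = fun ω => proj (θ t ω - η t • (G (θ t ω) + z ⟨t, ht⟩ ω))

namespace IsNoisyProjDescent

variable [MeasurableSpace E] {G : E → E} {η : ℕ → ℝ} {z : Fin T → Ω → E} {θ : ℕ → Ω → E}

lemma mem (hθ : IsNoisyProjDescent C proj ℱ G η z θ) (hproj : IsMetricProjection C proj)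
    {t : ℕ} (ht : t ≤ T) (ω : Ω) : θ t ω ∈ C := by
  cases t with
  | zero => exact hθ.zero_mem ω
  | succ t =>
    rw [hθ.succ t ht]
    exact (hproj _).1

lemma rescale {w : ℝ} (hw : w ≠ 0)
    (hθ : IsNoisyProjDescent C proj ℱ (fun x => w • G x) η z θ) :
    IsNoisyProjDescent C proj ℱ G (fun t => w * η t) (fun t ω => w⁻¹ • z t ω) θ where
  measurable_zero := hθ.measurable_zero
  zero_mem := hθ.zero_mem
  succ t ht := by
    rw [hθ.succ t ht]
    funext ω
    rw [mul_comm, mul_smul, smul_add w, smul_inv_smul₀ hw]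

end IsNoisyProjDescent

variable [MeasurableSpace E] [BorelSpace E] [SecondCountableTopology E]

lemma IsNoisyProjDescent.measurable {G : E → E} {η : ℕ → ℝ} {z : Fin T → Ω → E} {θ : ℕ → Ω → E}
    {v : ℝ} (hθ : IsNoisyProjDescent C proj ℱ G η z θ) (hproj : IsMetricProjection C proj)
    (hC : Convex ℝ C) (hG : Measurable G) (hz : IsMartingaleNoise ℱ z v P) {t : ℕ} (ht : t ≤ T) :
    Measurable[ℱ t] (θ t) := by
  induction t with
  | zero => exact hθ.measurable_zero
  | succ t ih =>
    have h_past : Measurable[ℱ (t + 1)] (θ t) :=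
      (ih (Nat.le_of_succ_le ht)).mono (ℱ.mono t.le_succ) le_rfl
    rw [hθ.succ t ht]
    exact (hproj.lipschitzWith_one hC).continuous.measurable.comp
      (h_past.sub (((hG.comp h_past).add (hz.measurable ⟨t, ht⟩)).const_smul (η t)))

variable [CompleteSpace E] [IsProbabilityMeasure P] {F : E → ℝ} {μ v : ℝ} {A : ℝ≥0}

lemma integral_sub_le_of_projected_gradient_step {m : MeasurableSpace Ω} (hm : m ≤ mΩ)
    {X U Y z : Ω → E} (t : ℕ) (hμ : 0 < μ) (hproj : IsMetricProjection C proj)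
    (hF : StrongConvexOn C μ F) (hA : LipschitzOnWith A F C) (hFd : Differentiable ℝ F)
    (hX : Measurable[m] X) (hXC : ∀ ω, X ω ∈ C) (hU : Measurable[m] U) (hUC : ∀ ω, U ω ∈ C)
    (hz : MemLp z 2 P) (hz0 : P[z | m] =ᵐ[P] 0) (hzv : ∫ ω, ‖z ω‖ ^ 2 ∂P ≤ v)
    (hY : Measurable[mΩ] Y)
    (hYX : ∀ ω, Y ω = proj (X ω - (1 / (μ * (t + 1))) • (∇ F (X ω) + z ω))) :
    ∫ ω, F (Y ω) ∂P - ∫ ω, F (U ω) ∂P ≤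
      μ / 2 * (t * ∫ ω, ‖X ω - U ω‖ ^ 2 ∂P) - μ / 2 * ((t + 1) * ∫ ω, ‖Y ω - U ω‖ ^ 2 ∂P)
        + (4 * A ^ 2 + v) * (1 / (μ * (t + 1))) := by
  have hC := isBounded_of_strongConvexOn_of_lipschitzOnWith hμ hF hA
  obtain ⟨R, hR⟩ := Metric.isBounded_iff.1 hC
  have hYC : ∀ ω, Y ω ∈ C := fun ω => hYX ω ▸ (hproj _).1
  have hUX : StronglyMeasurable[m] (fun ω => U ω - X ω) := (hU.sub hX).stronglyMeasurable
  have hUX_le : ∀ ω, ‖U ω - X ω‖ ≤ R := fun ω => by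
    rw [← dist_eq_norm]
    exact hR (hUC ω) (hXC ω)
  have hz1 : Integrable z P := hz.integrable one_le_two
  have h_noise_zero : ∫ ω, ⟪z ω, U ω - X ω⟫ ∂P = 0 :=
    integral_inner_eq_zero_of_condExp_eq_zero hm hz1 hz0 hUX hUX_le
  have h_noise := integrable_inner_of_bounded hz1 (hUX.mono hm).aestronglyMeasurable hUX_le
  replace hX := hX.mono hm le_rfl
  replace hU := hU.mono hm le_rfl
  have h_FY := integrable_comp_of_lipschitzOnWith (P := P) hC hFd.continuous hA hY hYC
  have h_FU := integrable_comp_of_lipschitzOnWith (P := P) hC hFd.continuous hA hU hUC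
  have h_before := (integrable_norm_sub_sq (P := P) hC hX hU hXC hUC).const_mul (t : ℝ)
    |>.const_mul (μ / 2)
  have h_after := (integrable_norm_sub_sq (P := P) hC hY hU hYC hUC).const_mul (t + 1 : ℝ)
    |>.const_mul (μ / 2)
  have h_sq : Integrable (fun ω => ‖z ω‖ ^ 2) P := hz.integrable_norm_pow two_ne_zero
  have h_error := ((integrable_const (4 * (A : ℝ) ^ 2)).add h_sq).mul_const (1 / (μ * (t + 1)))
  have h_step := integral_mono (h_FY.sub h_FU) (((h_before.sub h_after).add h_noise).add h_error)
    fun ω => sub_le_of_projected_gradient_step t hproj hF hA (hFd _) hμ (hXC ω) (hUC ω) (hYX ω)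
  rw [integral_sub' h_FY h_FU, integral_add' ((h_before.sub h_after).add h_noise) h_error,
    integral_add' (h_before.sub h_after) h_noise, integral_sub' h_before h_after, h_noise_zero,
    integral_const_mul, integral_const_mul, integral_const_mul, integral_const_mul,
    integral_mul_const, integral_add' (integrable_const _) h_sq, integral_const, probReal_univ,
    one_smul, add_zero] at h_step
  refine h_step.trans ?_
  gcongr

namespace IsNoisyProjDescent

variable {z : Fin T → Ω → E} {θ : ℕ → Ω → E}

lemma sum_Ico_integral_sub_le (hμ : 0 < μ) (hproj : IsMetricProjection C proj)
    (hF : StrongConvexOn C μ F) (hA : LipschitzOnWith A F C) (hFd : Differentiable ℝ F)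
    (hz : IsMartingaleNoise ℱ z v P)
    (hθ : IsNoisyProjDescent C proj ℱ (∇ F) (fun t => 1 / (μ * (t + 1))) z θ) {s : ℕ} (hs : s ≤ T)
    {U : Ω → E} (hU : Measurable[ℱ s] U) (hUC : ∀ ω, U ω ∈ C) :
    ∑ t ∈ Finset.Ico s T, (∫ ω, F (θ (t + 1) ω) ∂P - ∫ ω, F (U ω) ∂P) ≤
      μ / 2 * (s * ∫ ω, ‖θ s ω - U ω‖ ^ 2 ∂P)
        + (4 * A ^ 2 + v) / μ * ∑ t ∈ Finset.Ico s T, 1 / ((t : ℝ) + 1) := by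
  have h_adapted : ∀ t ≤ T, Measurable[ℱ t] (θ t) := fun _ =>
    hθ.measurable hproj hF.1 (measurable_gradient F) hz
  set D : ℕ → ℝ := fun t => μ / 2 * (t * ∫ ω, ‖θ t ω - U ω‖ ^ 2 ∂P)
  have h_step : ∀ t ∈ Finset.Ico s T, ∫ ω, F (θ (t + 1) ω) ∂P - ∫ ω, F (U ω) ∂P ≤
      -(D (t + 1) - D t) + (4 * A ^ 2 + v) / μ * (1 / ((t : ℝ) + 1)) := by
    intro t ht
    obtain ⟨hst, htT⟩ := Finset.mem_Ico.1 ht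
    have h := integral_sub_le_of_projected_gradient_step (ℱ.le t) t hμ hproj hF hA hFd
      (h_adapted t htT.le) (hθ.mem hproj htT.le) (hU.mono (ℱ.mono hst) le_rfl) hUC
      (hz.memLp ⟨t, htT⟩) (hz.condExp_eq_zero ⟨t, htT⟩) (hz.integral_norm_sq_le ⟨t, htT⟩)
      ((h_adapted (t + 1) htT).mono (ℱ.le (t + 1)) le_rfl) (congrFun (hθ.succ t htT))
    have h_rate : (4 * (A : ℝ) ^ 2 + v) * (1 / (μ * (t + 1))) =
        (4 * A ^ 2 + v) / μ * (1 / ((t : ℝ) + 1)) := by field_simp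
    simp only [D, Nat.cast_add_one]
    linarith
  have h_final : 0 ≤ D T := by positivity
  have h_sum := Finset.sum_le_sum h_step
  rw [Finset.sum_add_distrib, ← Finset.mul_sum, Finset.sum_neg_distrib,
    Finset.sum_Ico_sub D hs] at h_sum
  change _ ≤ D s + _
  linarith

lemma integral_last_sub_le (hT : 1 ≤ T) (hμ : 0 < μ) (hproj : IsMetricProjection C proj)
    (hF : StrongConvexOn C μ F) (hA : LipschitzOnWith A F C) (hFd : Differentiable ℝ F)
    (hz : IsMartingaleNoise ℱ z v P)
    (hθ : IsNoisyProjDescent C proj ℱ (∇ F) (fun t => 1 / (μ * (t + 1))) z θ) {u : E}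
    (hu : u ∈ C) :
    ∫ ω, F (θ T ω) ∂P - F u ≤ 3 * ((4 * A ^ 2 + v) / μ) * (1 + Real.log T) / T := by
  have hv : 0 ≤ v :=
    (integral_nonneg fun _ => sq_nonneg _).trans (hz.integral_norm_sq_le ⟨0, hT⟩)
  refine last_sub_le_of_sum_Ico_sub_le (a := fun t => ∫ ω, F (θ t ω) ∂P) hT (by positivity)
    (fun s hs => ?_) ?_
  · simpa using hθ.sum_Ico_integral_sub_le hμ hproj hF hA hFd hz hs.le
      (hθ.measurable hproj hF.1 (measurable_gradient F) hz hs.le) (hθ.mem hproj hs.le)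
  · simpa using hθ.sum_Ico_integral_sub_le hμ hproj hF hA hFd hz T.zero_le measurable_const
      fun _ => hu

end IsNoisyProjDescent

end NoisyProjectedGradientDescent

section IndependentNoise

open scoped RealInnerProductSpace

lemma iIndepFun_curry {ι κ Ω : Type*} {𝓧 : ι → κ → Type*} [∀ i j, MeasurableSpace (𝓧 i j)]
    {mΩ : MeasurableSpace Ω} {P : Measure Ω} {X : (i : ι) → (j : κ) → Ω → 𝓧 i j}
    (mX : ∀ i j, Measurable (X i j))
    (hX : iIndepFun (fun (p : ι × κ) ω => X p.1 p.2 ω) P) :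
    iIndepFun (fun i ω => (X i · ω)) P := by
  have := hX.isProbabilityMeasure
  have hX' : iIndepFun (fun (p : (_ : ι) × κ) ω => X p.1 p.2 ω) P :=
    hX.precomp (Equiv.sigmaEquivProd ι κ).injective
  have : ∀ i j, IsProbabilityMeasure (P.map (X i j)) :=
    fun i j => Measure.isProbabilityMeasure_map (mX i j).aemeasurable
  have h_row_indep : ∀ i, iIndepFun (X i) P :=
    fun i => iIndepFun.precomp (g := fun j => (i, j)) (Prod.mk_right_injective i) hX
  have h_row : ∀ i, P.map (fun ω => (X i · ω)) = Measure.infinitePi fun j => P.map (X i j) :=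
    fun i => (iIndepFun_iff_map_fun_eq_infinitePi_map (mX i)).1 (h_row_indep i)
  rw [iIndepFun_iff_map_fun_eq_infinitePi_map (by fun_prop)]
  simp only [h_row]
  rw [← Measure.infinitePi_map_piCurry fun i j => P.map (X i j),
    ← (iIndepFun_iff_map_fun_eq_infinitePi_map (by fun_prop)).1 hX',
    Measure.map_map (by fun_prop) (by fun_prop)]
  rfl

variable {E Ω : Type*} [MeasurableSpace E] {mΩ : MeasurableSpace Ω} {P : Measure Ω} {T : ℕ}
  {ξ : Fin T → Ω → E}

/-- The filtration whose `σ`-algebra at time `t` is generated by the first `t` noise vectors,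
`ξ 0, …, ξ (t - 1)`. It is trivial at time `0`, unlike `Filtration.natural`. -/
def history (ξ : Fin T → Ω → E) (hξ : ∀ t, Measurable (ξ t)) : Filtration ℕ mΩ where
  seq t := ⨆ s ∈ {s : Fin T | (s : ℕ) < t}, MeasurableSpace.comap (ξ s) inferInstance
  mono' _ _ h := biSup_mono fun _ hs => lt_of_lt_of_le hs h
  le' _ := iSup₂_le fun s _ => (hξ s).comap_le

lemma indep_comap_history (hξ : ∀ t, Measurable (ξ t)) (h_indep : iIndepFun ξ P) (t : Fin T) :
    Indep (MeasurableSpace.comap (ξ t) inferInstance) (history ξ hξ t) P := by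
  have h_disjoint : Disjoint {t} {s : Fin T | (s : ℕ) < t} :=
    Set.disjoint_singleton_left.2 (lt_irrefl (t : ℕ))
  simpa only [iSup_singleton] using!
    indep_iSup_of_disjoint (fun s => (hξ s).comap_le) h_indep.iIndep h_disjoint

variable [NormedAddCommGroup E] [InnerProductSpace ℝ E] [CompleteSpace E] [BorelSpace E]
  [SecondCountableTopology E]

lemma isMartingaleNoise_history {v : ℝ} (hξ : ∀ t, Measurable (ξ t)) (h_indep : iIndepFun ξ P)
    (h_memLp : ∀ t, MemLp (ξ t) 2 P) (h_mean : ∀ t, P[ξ t] = 0)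
    (h_var : ∀ t, ∫ ω, ‖ξ t ω‖ ^ 2 ∂P ≤ v) : IsMartingaleNoise (history ξ hξ) ξ v P where
  measurable t := (comap_measurable (ξ t)).mono
    (le_biSup (fun s => MeasurableSpace.comap (ξ s) inferInstance) (Nat.lt_succ_self (t : ℕ)))
    le_rfl
  memLp := h_memLp
  condExp_eq_zero t := by
    have := h_indep.isProbabilityMeasure
    have h_condExp := condExp_indep_eq (hξ t).comap_le ((history ξ hξ).le t)
      (comap_measurable (ξ t)).stronglyMeasurable (indep_comap_history hξ h_indep t)
    rwa [h_mean t] at h_condExp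
  integral_norm_sq_le := h_var

section StdGaussian

variable [FiniteDimensional ℝ E]

lemma integral_norm_sq_stdGaussian :
    ∫ x, ‖x‖ ^ 2 ∂(stdGaussian E) = Module.finrank ℝ E := by
  set b := stdOrthonormalBasis ℝ E
  have h_coord (i) : ∫ x, ⟪b i, x⟫ ^ 2 ∂(stdGaussian E) = 1 := by
    have h := variance_dual_stdGaussian (innerSL ℝ (b i))
    rw [variance_of_integral_eq_zero (innerSL ℝ (b i)).continuous.aemeasurable
      (integral_strongDual_stdGaussian _)] at h
    simpa using h
  simp only [← b.sum_sq_inner_right]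
  rw [integral_finsetSum]
  · simp [h_coord]
  · intro i _
    exact ((innerSL ℝ (b i)).comp_memLp' IsGaussian.memLp_two_id).integrable_sq

lemma isMartingaleNoise_history_of_stdGaussian (hξ : ∀ t, Measurable (ξ t))
    (h_indep : iIndepFun ξ P) (h_law : ∀ t, HasLaw (ξ t) (stdGaussian E) P) :
    IsMartingaleNoise (history ξ hξ) ξ (Module.finrank ℝ E) P := by
  refine isMartingaleNoise_history hξ h_indep (fun t => ?_) (fun t => ?_) (fun t => ?_)
  · exact IsGaussian.memLp_two_id.comp_measurePreserving ((h_law t).measurePreserving (hξ t))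
  · rw [(h_law t).integral_eq, integral_id_stdGaussian]
  · exact ((h_law t).integral_comp (f := fun x => ‖x‖ ^ 2) (by fun_prop)).trans_le
      integral_norm_sq_stdGaussian.le

end StdGaussian

lemma isMartingaleNoise_history_of_gaussianReal {κ : Type*} [Fintype κ]
    {ξ : Fin T → Ω → EuclideanSpace ℝ κ} (hξ : ∀ t, Measurable (ξ t))
    (h_indep : iIndepFun (fun (p : Fin T × κ) ω => ξ p.1 ω p.2) P)
    (h_law : ∀ t k, P.map (fun ω => ξ t ω k) = gaussianReal 0 1) :
    IsMartingaleNoise (history ξ hξ) ξ (Fintype.card κ) P := by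
  have h_meas : ∀ t k, Measurable fun ω => ξ t ω k := fun t k => by fun_prop
  have h_vectors : iIndepFun ξ P :=
    (iIndepFun_curry h_meas h_indep).comp (fun _ => WithLp.toLp 2) fun _ => by fun_prop
  have h_stdGaussian (t) : HasLaw (ξ t) (stdGaussian (EuclideanSpace ℝ κ)) P := by
    refine ⟨(hξ t).aemeasurable, ?_⟩
    have h_row := (h_indep.precomp (Prod.mk_right_injective t)).map_fun_eq_pi_map
      fun k => (h_meas t k).aemeasurable
    simp only [h_law] at h_row
    rw [← map_pi_eq_stdGaussian, ← h_row, Measure.map_map (by fun_prop) (by fun_prop)]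
    rfl
  simpa using isMartingaleNoise_history_of_stdGaussian hξ h_vectors h_stdGaussian

end IndependentNoise

section AdaptiveWeights

lemma div_natCeil_div_le (a : ℝ) {b : ℝ} (hb : 0 < b) : a / ⌈a / b⌉₊ ≤ b :=
  div_le_of_le_mul₀ (Nat.cast_nonneg _) hb.le ((div_le_iff₀' hb).1 (Nat.le_ceil _))
lemma sum_one_div_adaptive_weight_sq_mul {ι : Type*} [Fintype ι] {n : ι → ℝ} {b : ℝ}
    (hn : ∀ i, 0 < n i) (hb : 0 ≤ b) :
    ∑ i, 1 / (√(b / (Fintype.card ι * n i)) ^ 2 * n i) = Fintype.card ι ^ 2 / b := by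
  have h_term (i) : 1 / (√(b / (Fintype.card ι * n i)) ^ 2 * n i) = Fintype.card ι / b := by
    have := (hn i).ne'
    rw [Real.sq_sqrt (div_nonneg hb (mul_nonneg (Nat.cast_nonneg _) (hn i).le))]
    field_simp
  simp only [h_term, Finset.sum_const, Finset.card_univ, nsmul_eq_mul]
  ring

end AdaptiveWeights

section WeightedDescent

open scoped NNReal Gradient

variable {E Ω : Type*} [NormedAddCommGroup E] [InnerProductSpace ℝ E] [CompleteSpace E]
  [MeasurableSpace E] [BorelSpace E] [SecondCountableTopology E] {mΩ : MeasurableSpace Ω}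
  {P : Measure Ω} [IsProbabilityMeasure P] {T : ℕ} {C : Set E} {proj : E → E} {v w : ℝ}

namespace IsNoisyProjDescent

variable {ℱ : Filtration ℕ mΩ} {ξ : Fin T → Ω → E} {θ : ℕ → Ω → E} {u : E}

lemma integral_last_sub_le_of_smul_gradient {F : E → ℝ} {μ σ : ℝ} {A : ℝ≥0} (hT : 1 ≤ T)
    (hμ : 0 < μ) (hw : w ≠ 0) (hproj : IsMetricProjection C proj) (hF : StrongConvexOn C μ F)
    (hA : LipschitzOnWith A F C) (hFd : Differentiable ℝ F) (hξ : IsMartingaleNoise ℱ ξ v P)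
    (hθ : IsNoisyProjDescent C proj ℱ (fun x => w • ∇ F x) (fun t => 1 / (w * μ * (t + 1)))
      (fun t ω => σ • ξ t ω) θ) (hu : u ∈ C) :
    ∫ ω, F (θ T ω) ∂P - F u ≤
      3 * ((4 * A ^ 2 + (w⁻¹ * σ) ^ 2 * v) / μ) * (1 + Real.log T) / T := by
  have h_step (t : ℕ) : w * (1 / (w * μ * (t + 1))) = 1 / (μ * (t + 1)) := by field_simp
  have h_rescaled := hθ.rescale hw
  simp only [h_step, smul_smul] at h_rescaled
  exact h_rescaled.integral_last_sub_le hT hμ hproj hF hA hFd (hξ.const_smul (w⁻¹ * σ)) hu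

lemma integral_last_sum_sub_le {κ : Type*} [Fintype κ] [Nonempty κ] {ℓ : κ → E → ℝ} {lam : ℝ}
    {Γ : ℝ≥0} (hT : 1 ≤ T) (hlam : 0 < lam) (hw : w ≠ 0) (hproj : IsMetricProjection C proj)
    (hℓ : ∀ j, StrongConvexOn C lam (ℓ j)) (hΓ : ∀ j, LipschitzOnWith Γ (ℓ j) C)
    (hd : ∀ j, Differentiable ℝ (ℓ j)) (hξ : IsMartingaleNoise ℱ ξ v P)
    (hθ : IsNoisyProjDescent C proj ℱ (fun x => w • ∇ (fun y => ∑ j, ℓ j y) x)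
      (fun t => 1 / (w * Fintype.card κ * lam * (t + 1))) (fun t ω => (Γ * √(T / 2)) • ξ t ω) θ)
    (hu : u ∈ C) :
    ∫ ω, ∑ j, ℓ j (θ T ω) ∂P - ∑ j, ℓ j u ≤ 3 * (1 + Real.log T) * Γ ^ 2 / lam *
      (4 * (Fintype.card κ / T) + v / 2 * (1 / (w ^ 2 * Fintype.card κ))) := by
  have h_strong := strongConvexOn_sum (hℓ (Classical.arbitrary κ)).1 Finset.univ fun j _ => hℓ j
  have h_lipschitz := lipschitzOnWith_sum Finset.univ fun j _ => hΓ j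
  simp only [Finset.sum_const, Finset.card_univ, nsmul_eq_mul] at h_strong h_lipschitz
  simp only [mul_assoc w (Fintype.card κ : ℝ) lam] at hθ
  have h_card : (0 : ℝ) < Fintype.card κ := by exact_mod_cast Fintype.card_pos
  have h := hθ.integral_last_sub_le_of_smul_gradient hT (mul_pos h_card hlam) hw hproj h_strong
    h_lipschitz (by fun_prop) hξ hu
  have : (0 : ℝ) < T := by exact_mod_cast hT
  refine h.trans_eq ?_
  rw [← mul_assoc, mul_pow, Real.sq_sqrt (by positivity)]
  push_cast
  field_simp

end IsNoisyProjDescent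

/- `T` is the least number of steps for which the optimization error `4 ∑ |κ i| / T` is at most
four times the noise error `v / 2 * ∑ 1 / (w i ^ 2 * |κ i|)`, which does not depend on `T`. -/
theorem stmt11_general {ι : Type*} [Fintype ι] [Nonempty ι] {κ : ι → Type*}
    [∀ i, Fintype (κ i)] [∀ i, Nonempty (κ i)] {ℓ : (i : ι) → κ i → E → ℝ} {lam : ℝ} {Γ : ℝ≥0}
    {w : ι → ℝ} {ℱ : ι → Filtration ℕ mΩ} {ξ : ι → Fin T → Ω → E} {θ : ι → ℕ → Ω → E} {u : ι → E}
    (hlam : 0 < lam) (hv : 0 < v) (hw : ∀ i, w i ≠ 0) (hproj : IsMetricProjection C proj)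
    (hℓ : ∀ i j, StrongConvexOn C lam (ℓ i j)) (hΓ : ∀ i j, LipschitzOnWith Γ (ℓ i j) C)
    (hd : ∀ i j, Differentiable ℝ (ℓ i j)) (hξ : ∀ i, IsMartingaleNoise (ℱ i) (ξ i) v P)
    (hθ : ∀ i, IsNoisyProjDescent C proj (ℱ i) (fun x => w i • ∇ (fun y => ∑ j, ℓ i j y) x)
      (fun t => 1 / (w i * Fintype.card (κ i) * lam * (t + 1)))
      (fun t ω => (Γ * √(T / 2)) • ξ i t ω) (θ i)) (hu : ∀ i, u i ∈ C)
    (hT : T = ⌈2 / v * (∑ i, (Fintype.card (κ i) : ℝ)) /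
      ∑ i, 1 / (w i ^ 2 * Fintype.card (κ i))⌉₊) :
    ∑ i, ∫ ω, ∑ j, ℓ i j (θ i T ω) ∂P - ∑ i, ∑ j, ℓ i j (u i) ≤
      15 / 2 * (Γ ^ 2 * v * (1 + Real.log T) / lam) *
        ∑ i, 1 / (w i ^ 2 * Fintype.card (κ i)) := by
  have h_card (i) : (0 : ℝ) < Fintype.card (κ i) := by exact_mod_cast Fintype.card_pos
  have h_card_sum : 0 < ∑ i, (Fintype.card (κ i) : ℝ) :=
    Finset.sum_pos (fun i _ => h_card i) Finset.univ_nonempty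
  have h_term (i) : 0 < 1 / (w i ^ 2 * Fintype.card (κ i)) :=
    one_div_pos.2 (mul_pos (sq_pos_of_ne_zero (hw i)) (h_card i))
  have h_sum := Finset.sum_pos (fun i _ => h_term i) (Finset.univ_nonempty (α := ι))
  have hT1 : 1 ≤ T := hT ▸ Nat.ceil_pos.2 (div_pos (mul_pos (by positivity) h_card_sum) h_sum)
  have h_user (i) := (hθ i).integral_last_sum_sub_le hT1 hlam (hw i) hproj (hℓ i) (hΓ i) (hd i)
    (hξ i) (hu i)
  have h_optimization : (∑ i, (Fintype.card (κ i) : ℝ)) / T ≤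
      v / 2 * ∑ i, 1 / (w i ^ 2 * Fintype.card (κ i)) := by
    have h := div_natCeil_div_le (2 / v * ∑ i, (Fintype.card (κ i) : ℝ)) h_sum
    rw [← hT, mul_div_assoc, div_mul_eq_mul_div, div_le_iff₀ hv] at h
    linarith
  rw [← Finset.sum_sub_distrib]
  refine (Finset.sum_le_sum fun i _ => h_user i).trans ?_
  rw [← Finset.mul_sum, Finset.sum_add_distrib, ← Finset.mul_sum, ← Finset.mul_sum,
    ← Finset.sum_div]
  have := Real.log_natCast_nonneg T
  calc _ ≤ 3 * (1 + Real.log T) * Γ ^ 2 / lam *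
        (5 * (v / 2 * ∑ i, 1 / (w i ^ 2 * Fintype.card (κ i)))) :=
        mul_le_mul_of_nonneg_left (by linarith) (by positivity)
    _ = _ := by ring

end WeightedDescent

/-- Theorem 5(c) with the adaptive weights made explicit: there is a universal constant
`K > 0` such that, with differentiable, `λ`-strongly convex (i.e. `ℓ - (λ/2)‖·‖²` convex),
`Γ`-Lipschitz per-example losses on a compact convex `C`, adaptive weights
`wᵢ = √(N β̄/(m nᵢ))` (so `wᵢ² = N β̄/(m nᵢ)`),
`T = ⌈(2/d)(∑ nᵢ)/(∑ 1/(wᵢ² nᵢ))⌉`, independent standard Gaussian noise, and noisy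
projected GD with step sizes `η i t = 1/(wᵢ nᵢ λ t)`, the total excess empirical risk of
the final iterates is at most `K Γ² d m² (1 + log T)/(N λ β̄)`. -/
theorem stmt11 :
    ∃ K : ℝ, 0 < K ∧
      ∀ (d m : ℕ), 1 ≤ d → 1 ≤ m →
      ∀ nn : Fin m → ℕ, (∀ i, 1 ≤ nn i) →
      ∀ N βbar : ℝ, 0 < N → 0 < βbar →
      ∀ Γ lam : ℝ, 0 < Γ → 0 < lam →
      ∀ C : Set (EuclideanSpace ℝ (Fin d)), C.Nonempty → IsCompact C → Convex ℝ C →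
      ∀ ℓ : (i : Fin m) → Fin (nn i) → EuclideanSpace ℝ (Fin d) → ℝ,
        (∀ i j, Differentiable ℝ (ℓ i j)) →
        (∀ i j, ConvexOn ℝ Set.univ (fun x => ℓ i j x - lam / 2 * ‖x‖ ^ 2)) →
        (∀ i j, ∀ x ∈ C, ∀ y ∈ C, |ℓ i j x - ℓ i j y| ≤ Γ * ‖x - y‖) →
      ∀ θstar : Fin m → EuclideanSpace ℝ (Fin d),
        (∀ i, θstar i ∈ C) → (∀ i, ∀ y ∈ C, (∑ j, ℓ i j (θstar i)) ≤ ∑ j, ℓ i j y) →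
      let w : Fin m → ℝ := fun i => Real.sqrt (N * βbar / (m * (nn i : ℝ)))
      ∀ T : ℕ,
        T = ⌈(2 / (d : ℝ)) * (∑ i, (nn i : ℝ)) / (∑ i, 1 / (w i ^ 2 * (nn i : ℝ)))⌉₊ →
      ∀ (Ω : Type) (_ : MeasureSpace Ω), IsProbabilityMeasure (ℙ : Measure Ω) →
      ∀ ξ : Fin m → Fin T → Ω → EuclideanSpace ℝ (Fin d),
        (∀ i t, Measurable (ξ i t)) →
        iIndepFun (m := fun _ => (inferInstance : MeasurableSpace ℝ))
          (fun p : (Fin m × Fin T) × Fin d => fun ω => ξ p.1.1 p.1.2 ω p.2) ℙ →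
        (∀ i t k, Measure.map (fun ω => ξ i t ω k) ℙ = gaussianReal 0 1) →
      ∀ proj : EuclideanSpace ℝ (Fin d) → EuclideanSpace ℝ (Fin d),
        (∀ x, proj x ∈ C ∧ ∀ y ∈ C, ‖x - proj x‖ ≤ ‖x - y‖) →
      ∀ θ : Fin m → ℕ → Ω → EuclideanSpace ℝ (Fin d),
        (∀ i, ∃ θ0 ∈ C, θ i 0 = fun _ => θ0) →
        (∀ i, ∀ t : ℕ, (ht : t < T) →
          θ i (t + 1) = fun ω =>
            proj (θ i t ω -
              (1 / (w i * (nn i : ℝ) * lam * (t + 1))) •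
                (w i • gradient (fun x => ∑ j, ℓ i j x) (θ i t ω) +
                  (Γ * Real.sqrt (T / 2)) • ξ i ⟨t, ht⟩ ω))) →
      (∑ i, ∫ ω, (∑ j, ℓ i j (θ i T ω)) ∂(ℙ : Measure Ω)) - (∑ i, ∑ j, ℓ i j (θstar i)) ≤
        K * (Γ ^ 2 * d * m ^ 2 * (1 + Real.log T)) / (N * lam * βbar) := by
  refine ⟨15 / 2, by norm_num, ?_⟩
  intro d m hd hm n hn N β hN hβ Γ lam hΓ hlam C _ _ hC ℓ hdiff hconv hlip θstar hθstar _ w T hT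
    Ω _ _ ξ hξ h_indep h_law proj hproj θ hθ0 hθ
  lift Γ to NNReal using hΓ.le
  have : NeZero m := ⟨by lia⟩
  have (i : Fin m) : Nonempty (Fin (n i)) := ⟨⟨0, hn i⟩⟩
  have h_card (i : Fin m) : (0 : ℝ) < n i := by exact_mod_cast hn i
  have hw (i : Fin m) : w i ≠ 0 := (Real.sqrt_pos.2 (by have := h_card i; positivity)).ne'
  have h_noise (i : Fin m) : IsMartingaleNoise (history (ξ i) (hξ i)) (ξ i) d ℙ := by
    simpa using isMartingaleNoise_history_of_gaussianReal (hξ i) (h_indep.precomp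
      ((Prod.mk_right_injective i).prodMap Function.injective_id)) (h_law i)
  have h_weights : ∑ i, 1 / (w i ^ 2 * n i) = m ^ 2 / (N * β) := by
    simpa using sum_one_div_adaptive_weight_sq_mul h_card (mul_pos hN hβ).le
  refine (stmt11_general (θ := θ) hlam (Nat.cast_pos.2 hd) hw hproj
    (fun i j => strongConvexOn_iff_convex.2 ((hconv i j).subset (Set.subset_univ _) hC))
    (fun i j => LipschitzOnWith.of_dist_le_mul
      (by simpa only [dist_eq_norm, Real.norm_eq_abs] using hlip i j))
    hdiff h_noise (fun i => ?_) hθstar (by simpa using hT)).trans_eq ?_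
  · obtain ⟨θ0, hθ0C, hθ0i⟩ := hθ0 i
    exact ⟨hθ0i ▸ measurable_const, fun _ => hθ0i ▸ hθ0C, by simpa using hθ i⟩
  · simp only [Fintype.card_fin, h_weights]
    field_simp
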